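/- Let P be a partially ordered set with a greatest element ⊤ and let a ∈ P be very weakly ⊤-compact, that is: whenever C ⊆ P is a nonempty chain that is unbounded below ⊤ and no element of C lies below an element maximal below ⊤, there exist c ∈ C and r ∈ P with r < ⊤, c ≤ r and a ≤ r. Then a is a non-generator if and only if a ≤ p for every p ∈ P that is maximal below ⊤. -/

import Mathlib

def NonGenerator {P : Type*} [PartialOrder P] [OrderTop P] (a : P) : Prop :=
  ∀ e : P, (¬ ∃ p : P, p < ⊤ ∧ a ≤ p ∧ e ≤ p) → e = ⊤

def MaximalBelowTop {P : Type*} [PartialOrder P] [OrderTop P] (p : P) : Prop :=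
  p < ⊤ ∧ ¬ ∃ q : P, p < q ∧ q < ⊤

def UnboundedBelowTopChain {P : Type*} [PartialOrder P] [OrderTop P] (C : Set P) : Prop :=
  C.Nonempty ∧ IsChain (· ≤ ·) C ∧ (∀ c ∈ C, c < ⊤) ∧
    ¬ ∃ p : P, p < ⊤ ∧ ∀ c ∈ C, c ≤ p

/-!
If `e < ⊤` lies below no element maximal below `⊤`, then Zorn's lemma must fail above `e`, so some
chain above `e` is unbounded below `⊤`; very weak `⊤`-compactness of `a`, applied to that chain,
gives a common bound of `a` and `e` below `⊤`. If `e ≤ p` with `p` maximal below `⊤`, then `p` is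
such a bound as soon as `a ≤ p`.
-/

section

variable {P : Type*} [PartialOrder P] [OrderTop P] {a e p : P}

/-- Very weak `⊤`-compactness of `a`: every chain unbounded below `⊤`, none of whose members lies
below an element maximal below `⊤`, has a member with an upper bound `r < ⊤` in common with `a`. -/
def VeryWeaklyTopCompact (a : P) : Prop :=
  ∀ C : Set P, UnboundedBelowTopChain C →
    (∀ c ∈ C, ¬ ∃ p : P, MaximalBelowTop p ∧ c ≤ p) →
    ∃ c ∈ C, ∃ r : P, r < ⊤ ∧ c ≤ r ∧ a ≤ r

theorem nonGenerator_iff_forall_lt_top :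
    NonGenerator a ↔ ∀ e < ⊤, ∃ r < ⊤, a ≤ r ∧ e ≤ r :=
  forall_congr' fun _ ↦ by rw [lt_top_iff_ne_top, ne_eq, ← not_imp_comm]

theorem maximalBelowTop_iff_maximal : MaximalBelowTop p ↔ Maximal (· < ⊤) p := by
  simp only [MaximalBelowTop, maximal_iff_forall_gt, not_exists, not_and]

theorem NonGenerator.le_of_maximalBelowTop (ha : NonGenerator a) (hp : MaximalBelowTop p) :
    a ≤ p := by
  obtain ⟨r, hr, har, hpr⟩ := nonGenerator_iff_forall_lt_top.mp ha p hp.1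
  exact har.trans ((maximalBelowTop_iff_maximal.mp hp).le_of_ge hr hpr)

theorem exists_maximalBelowTop_ge_or_exists_unboundedBelowTopChain (he : e < ⊤) :
    (∃ p, MaximalBelowTop p ∧ e ≤ p) ∨ ∃ C ⊆ Set.Ici e, UnboundedBelowTopChain C := by
  refine or_iff_not_imp_right.mpr fun no_unbounded ↦ ?_
  have chain_bounded : ∀ C ⊆ Set.Ico e ⊤, IsChain (· ≤ ·) C → ∀ c ∈ C,
      ∃ b ∈ Set.Ico e ⊤, ∀ z ∈ C, z ≤ b := by
    intro C hCe hC c hc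
    by_contra no_bound
    refine no_unbounded ⟨C, fun z hz ↦ (hCe hz).1, ⟨c, hc⟩, hC, fun z hz ↦ (hCe hz).2, ?_⟩
    rintro ⟨b, hb, hCb⟩
    exact no_bound ⟨b, ⟨(hCe hc).1.trans (hCb c hc), hb⟩, hCb⟩
  obtain ⟨m, hem, hm⟩ := zorn_le_nonempty₀ _ chain_bounded e ⟨le_rfl, he⟩
  have m_maximal : Maximal (· < ⊤) m :=
    ⟨hm.prop.2, fun q hq hmq ↦ hm.le_of_ge ⟨hem.trans hmq, hq⟩ hmq⟩
  exact ⟨m, maximalBelowTop_iff_maximal.mpr m_maximal, hem⟩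

namespace VeryWeaklyTopCompact

theorem exists_lt_top_of_not_le_maximalBelowTop (ha : VeryWeaklyTopCompact a) (he : e < ⊤)
    (hmax : ¬ ∃ p, MaximalBelowTop p ∧ e ≤ p) : ∃ r < ⊤, a ≤ r ∧ e ≤ r := by
  obtain ⟨C, hCe, hC⟩ :=
    (exists_maximalBelowTop_ge_or_exists_unboundedBelowTopChain he).resolve_left hmax
  have chain_avoids : ∀ c ∈ C, ¬ ∃ p, MaximalBelowTop p ∧ c ≤ p :=
    fun c hc ⟨p, hp, hcp⟩ ↦ hmax ⟨p, hp, (hCe hc).trans hcp⟩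
  obtain ⟨c, hc, r, hr, hcr, har⟩ := ha C hC chain_avoids
  exact ⟨r, hr, har, (hCe hc).trans hcr⟩

theorem nonGenerator_of_le_maximalBelowTop (ha : VeryWeaklyTopCompact a)
    (hle : ∀ p, MaximalBelowTop p → a ≤ p) : NonGenerator a := by
  refine nonGenerator_iff_forall_lt_top.mpr fun e he ↦ ?_
  by_cases hmax : ∃ p, MaximalBelowTop p ∧ e ≤ p
  · obtain ⟨p, hp, hep⟩ := hmax
    exact ⟨p, hp.1, hle p hp, hep⟩
  · exact ha.exists_lt_top_of_not_le_maximalBelowTop he hmax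

end VeryWeaklyTopCompact

end

theorem stmt_10 {P : Type*} [PartialOrder P] [OrderTop P] (a : P)
    (hvweak : ∀ C : Set P, UnboundedBelowTopChain C →
      (∀ c ∈ C, ¬ ∃ p : P, MaximalBelowTop p ∧ c ≤ p) →
      ∃ c ∈ C, ∃ r : P, r < ⊤ ∧ c ≤ r ∧ a ≤ r) :
    NonGenerator a ↔ ∀ p : P, MaximalBelowTop p → a ≤ p := by
  constructor
  · intro ha p hp
    exact ha.le_of_maximalBelowTop hp
  · exact VeryWeaklyTopCompact.nonGenerator_of_le_maximalBelowTop hvweak
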